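/- arXiv:2405.06213 — 3 statements merged into one kernel-verified Lean document; each statement's English description precedes it below -/
import Mathlib

section
/- Let γ > 1 and B, S > 0 be real constants. Then 0 < ϱ_c < ϱ_m, the value of the squared momentum at the critical density satisfies 𝔱(ϱ_c) = 𝔱_c = (γ−1)·ϱ_c^{γ+1}·S, and for every ρ with 0 < ρ ≤ ϱ_m and ρ ≠ ϱ_c one has 𝔱(ρ) < 𝔱_c. In other words, on (0, ϱ_m] the function ρ ↦ 𝔱(ρ) attains its maximum 𝔱_c uniquely at ρ = ϱ_c. -/
/-!
With `p = (a + b) / a`, Bernoulli's inequality `1 + p (u - 1) < u ^ p` at `u = s ^ a` says that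
`(a + b) s ^ a - a s ^ (a + b)` is strictly largest at `s = 1`. Rescaling by `ρ = c s`, where `c` is
the critical point of `ρ ↦ ρ ^ a * (B - ρ ^ b * S)`, turns this into the strict maximality of that
function at `c`. The squared momentum is the case `a = 2`, `b = γ - 1`, up to the factor `2`.
-/

theorem add_mul_rpow_sub_mul_rpow_add_lt {a b s : ℝ} (ha : 0 < a) (hb : 0 < b) (hs : 0 ≤ s)
    (hs_ne : s ≠ 1) : (a + b) * s ^ a - a * s ^ (a + b) < b := by
  have hu_ne : s ^ a - 1 ≠ 0 := fun h => hs_ne <|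
    (Real.rpow_left_inj hs zero_le_one ha.ne').1 (by rw [Real.one_rpow, sub_eq_zero.1 h])
  have bernoulli : 1 + (a + b) / a * (s ^ a - 1) < (1 + (s ^ a - 1)) ^ ((a + b) / a) :=
    one_add_mul_self_lt_rpow_one_add (by linarith [Real.rpow_nonneg hs a]) hu_ne
      ((one_lt_div ha).2 (by linarith))
  rw [add_sub_cancel, ← Real.rpow_mul hs, mul_div_cancel₀ _ ha.ne'] at bernoulli
  have hscaled := mul_lt_mul_of_pos_left bernoulli ha
  have hcancel : a * (1 + (a + b) / a * (s ^ a - 1)) = (a + b) * s ^ a - b := by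
    field_simp
    ring
  linarith

theorem rpow_mul_sub_rpow_mul_lt_of_critical {a b B S c ρ : ℝ} (ha : 0 < a) (hb : 0 < b)
    (hS : 0 < S) (hc : 0 < c) (critical : a * B = (a + b) * S * c ^ b) (hρ : 0 ≤ ρ)
    (hρ_ne : ρ ≠ c) : ρ ^ a * (B - ρ ^ b * S) < c ^ a * (B - c ^ b * S) := by
  obtain ⟨s, rfl⟩ : ∃ s, ρ = c * s := ⟨ρ / c, by field_simp⟩
  have hs : 0 ≤ s := nonneg_of_mul_nonneg_right hρ hc
  have hs_ne : s ≠ 1 := fun h => hρ_ne (by rw [h, mul_one])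
  have hgap : 0 < b - ((a + b) * s ^ a - a * s ^ (a + b)) :=
    sub_pos.2 (add_mul_rpow_sub_mul_rpow_add_lt ha hb hs hs_ne)
  have hdiff : a * (c ^ a * (B - c ^ b * S) - (c * s) ^ a * (B - (c * s) ^ b * S)) =
      c ^ a * c ^ b * S * (b - ((a + b) * s ^ a - a * s ^ (a + b))) := by
    rw [Real.mul_rpow hc.le hs, Real.mul_rpow hc.le hs, Real.rpow_add_of_nonneg hs ha.le hb.le]
    linear_combination (c ^ a - c ^ a * s ^ a) * critical
  refine sub_pos.1 (pos_of_mul_pos_right ?_ ha.le)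
  rw [hdiff]
  positivity

/-- The squared momentum `𝔱(ρ)` of a flow of density `ρ`, where `γ` is the adiabatic exponent. -/
noncomputable def squaredMomentum (γ B S ρ : ℝ) : ℝ :=
  2 * ρ ^ 2 * (B - ρ ^ (γ - 1) * S)

/-- The critical density `ϱ_c`, the positive stationary point of `squaredMomentum γ B S`. -/
noncomputable def criticalDensity (γ B S : ℝ) : ℝ :=
  (2 * B / ((γ + 1) * S)) ^ (1 / (γ - 1))

/-- The maximum density `ϱ_m`, the positive zero of `squaredMomentum γ B S`. -/
noncomputable def maximumDensity (γ B S : ℝ) : ℝ :=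
  (B / S) ^ (1 / (γ - 1))

/-- The squared critical momentum `𝔱_c`, written in closed form; it is the value of
`squaredMomentum γ B S` at the critical density. -/
noncomputable def squaredCriticalMomentum (γ B S : ℝ) : ℝ :=
  (γ - 1) * (2 * B / (γ + 1)) ^ ((γ + 1) / (γ - 1)) * S ^ (-2 / (γ - 1))

section SquaredMomentum

variable {γ B S : ℝ}

theorem criticalDensity_pos (hγ : -1 < γ) (hB : 0 < B) (hS : 0 < S) :
    0 < criticalDensity γ B S := by
  have : 0 < γ + 1 := by linarith
  unfold criticalDensity
  positivity

theorem criticalDensity_rpow_sub_one (hγ : -1 < γ) (hγ_ne : γ ≠ 1) (hB : 0 ≤ B) (hS : 0 < S) :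
    criticalDensity γ B S ^ (γ - 1) = 2 * B / ((γ + 1) * S) := by
  have : 0 < γ + 1 := by linarith
  rw [criticalDensity, one_div, Real.rpow_inv_rpow (by positivity) (sub_ne_zero.2 hγ_ne)]

theorem criticalDensity_lt_maximumDensity (hγ : 1 < γ) (hB : 0 < B) (hS : 0 < S) :
    criticalDensity γ B S < maximumDensity γ B S := by
  have : 0 < γ - 1 := sub_pos.2 hγ
  have hbase : 2 * B / ((γ + 1) * S) < B / S := by
    rw [mul_div_mul_comm]
    exact mul_lt_of_lt_one_left (by positivity) ((div_lt_one (by linarith)).2 (by linarith))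
  exact Real.rpow_lt_rpow (by positivity) hbase (by positivity)

theorem squaredMomentum_criticalDensity (hγ : -1 < γ) (hγ_ne : γ ≠ 1) (hB : 0 < B)
    (hS : 0 < S) : squaredMomentum γ B S (criticalDensity γ B S) =
      (γ - 1) * criticalDensity γ B S ^ (γ + 1) * S := by
  have hγ_add : γ + 1 ≠ 0 := by linarith
  have hsplit : criticalDensity γ B S ^ (γ + 1) =
      criticalDensity γ B S ^ (γ - 1) * criticalDensity γ B S ^ 2 := by
    rw [← Real.rpow_add_natCast (criticalDensity_pos hγ hB hS).ne']
    congr 1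
    push_cast
    ring
  rw [squaredMomentum, hsplit, criticalDensity_rpow_sub_one hγ hγ_ne hB.le hS]
  field_simp
  ring

theorem squaredCriticalMomentum_eq (hγ : -1 < γ) (hγ_ne : γ ≠ 1) (hB : 0 ≤ B) (hS : 0 < S) :
    squaredCriticalMomentum γ B S = (γ - 1) * criticalDensity γ B S ^ (γ + 1) * S := by
  have hγ_add : 0 < γ + 1 := by linarith
  have hγ_sub : γ - 1 ≠ 0 := sub_ne_zero.2 hγ_ne
  have hexp : -2 / (γ - 1) = 1 - (γ + 1) / (γ - 1) := by
    field_simp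
    ring
  rw [squaredCriticalMomentum, criticalDensity, ← Real.rpow_mul (by positivity),
    one_div_mul_eq_div, hexp, Real.rpow_sub hS, Real.rpow_one, ← div_div,
    Real.div_rpow (by positivity) hS.le]
  ring

theorem squaredMomentum_lt_squaredMomentum_criticalDensity {ρ : ℝ} (hγ : 1 < γ) (hB : 0 < B)
    (hS : 0 < S) (hρ : 0 ≤ ρ) (hρ_ne : ρ ≠ criticalDensity γ B S) :
    squaredMomentum γ B S ρ < squaredMomentum γ B S (criticalDensity γ B S) := by
  have hγ' : -1 < γ := by linarith
  have critical : 2 * B = (2 + (γ - 1)) * S * criticalDensity γ B S ^ (γ - 1) := by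
    rw [criticalDensity_rpow_sub_one hγ' hγ.ne' hB.le hS]
    have : γ + 1 ≠ 0 := by linarith
    field_simp
    ring
  have hlt := rpow_mul_sub_rpow_mul_lt_of_critical two_pos (sub_pos.2 hγ) hS
    (criticalDensity_pos hγ' hB hS) critical hρ hρ_ne
  rw [Real.rpow_two, Real.rpow_two] at hlt
  unfold squaredMomentum
  linarith

theorem stmt_0_general (hγ : 1 < γ) (hB : 0 < B) (hS : 0 < S) :
    0 < criticalDensity γ B S ∧
    criticalDensity γ B S < maximumDensity γ B S ∧
    squaredMomentum γ B S (criticalDensity γ B S) = squaredCriticalMomentum γ B S ∧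
    squaredCriticalMomentum γ B S = (γ - 1) * criticalDensity γ B S ^ (γ + 1) * S ∧
    ∀ ρ : ℝ, 0 ≤ ρ → ρ ≠ criticalDensity γ B S →
      squaredMomentum γ B S ρ < squaredCriticalMomentum γ B S := by
  have hγ' : -1 < γ := by linarith
  have hclosed := squaredCriticalMomentum_eq hγ' hγ.ne' hB.le hS
  have hvalue : squaredMomentum γ B S (criticalDensity γ B S) = squaredCriticalMomentum γ B S :=
    (squaredMomentum_criticalDensity hγ' hγ.ne' hB hS).trans hclosed.symm
  exact ⟨criticalDensity_pos hγ' hB hS, criticalDensity_lt_maximumDensity hγ hB hS, hvalue,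
    hclosed, fun ρ hρ hρ_ne =>
      (squaredMomentum_lt_squaredMomentum_criticalDensity hγ hB hS hρ hρ_ne).trans_eq hvalue⟩

end SquaredMomentum

/-- Let `γ > 1` and `B, S > 0`. With the squared momentum `𝔱 ρ = 2ρ²(B - ρ^(γ-1)S)`,
the critical density `ϱ_c = (2B/((γ+1)S))^(1/(γ-1))`, the maximum density
`ϱ_m = (B/S)^(1/(γ-1))` and the squared critical momentum
`𝔱_c = (γ-1)(2B/(γ+1))^((γ+1)/(γ-1)) S^(-2/(γ-1))`, one has `0 < ϱ_c < ϱ_m`,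
`𝔱(ϱ_c) = 𝔱_c = (γ-1)ϱ_c^(γ+1)S`, and `𝔱 ρ < 𝔱_c` for every `ρ ∈ (0, ϱ_m]` with `ρ ≠ ϱ_c`. -/
theorem stmt_0 (γ B S : ℝ) (hγ : 1 < γ) (hB : 0 < B) (hS : 0 < S) :
    0 < (2 * B / ((γ + 1) * S)) ^ (1 / (γ - 1)) ∧
    (2 * B / ((γ + 1) * S)) ^ (1 / (γ - 1)) < (B / S) ^ (1 / (γ - 1)) ∧
    2 * ((2 * B / ((γ + 1) * S)) ^ (1 / (γ - 1))) ^ 2 *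
        (B - ((2 * B / ((γ + 1) * S)) ^ (1 / (γ - 1))) ^ (γ - 1) * S) =
      (γ - 1) * (2 * B / (γ + 1)) ^ ((γ + 1) / (γ - 1)) * S ^ (-2 / (γ - 1)) ∧
    (γ - 1) * (2 * B / (γ + 1)) ^ ((γ + 1) / (γ - 1)) * S ^ (-2 / (γ - 1)) =
      (γ - 1) * ((2 * B / ((γ + 1) * S)) ^ (1 / (γ - 1))) ^ (γ + 1) * S ∧
    ∀ ρ : ℝ, 0 < ρ → ρ ≤ (B / S) ^ (1 / (γ - 1)) →
      ρ ≠ (2 * B / ((γ + 1) * S)) ^ (1 / (γ - 1)) →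
      2 * ρ ^ 2 * (B - ρ ^ (γ - 1) * S) <
        (γ - 1) * (2 * B / (γ + 1)) ^ ((γ + 1) / (γ - 1)) * S ^ (-2 / (γ - 1)) := by
  obtain ⟨hpos, hlt_max, hvalue, hclosed, hlt⟩ := stmt_0_general hγ hB hS
  exact ⟨hpos, hlt_max, hvalue, hclosed, fun ρ hρ _ => hlt ρ hρ.le⟩
end

section
/- Let γ > 1, B > 0, S > 0 be real constants and set D := B·S^{−1/γ}. Define the momentum function M(p) := (γp/((γ−1)S))^{1/γ} · √(2·S^{1/γ}·(D − (γp/(γ−1))^{(γ−1)/γ})) for p > 0. Then M is strictly antitone (strictly decreasing) on the closed interval [p_c(D), p^*(D)]. -/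
/-!
The flow is isentropic, so everything is a function of the enthalpy, rescaled by `S ^ (-1 / γ)` to
`t = (γp/(γ-1))^((γ-1)/γ)`, which increases with `p`. In these terms the Bernoulli law says that
the squared speed is proportional to `D - t`, the density is proportional to `t ^ (1/(γ-1))`, and
the pressures `p_c(D)` and `p^*(D)` correspond to `t = 2D/(γ+1)` and `t = D`. The momentum is thus
a multiple of `t ^ k * √(D - t)` with `k = 1/(γ-1)`, which has its maximum at
`t = 2kD/(2k+1) = 2D/(γ+1)` and decreases from there on.
-/

open Set Real

lemma strictAntiOn_rpow_mul_sub {k D : ℝ} (hk : 0 ≤ k) (hD : 0 ≤ D) :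
    StrictAntiOn (fun t : ℝ => t ^ k * (D - t)) (Ici (k * D / (k + 1))) := by
  refine strictAntiOn_of_deriv_neg (convex_Ici _)
    ((continuous_rpow_const hk).mul (by fun_prop)).continuousOn fun t ht => ?_
  rw [interior_Ici, mem_Ioi] at ht
  have ht_pos : 0 < t := lt_of_le_of_lt (by positivity) ht
  have hcrit : k * D < t * (k + 1) := (div_lt_iff₀ (by positivity)).1 ht
  have hderiv : HasDerivAt (fun t : ℝ => t ^ k * (D - t))
      (k * t ^ (k - 1) * (D - t) + t ^ k * (-1)) t :=
    (hasDerivAt_rpow_const (Or.inl ht_pos.ne')).mul ((hasDerivAt_id t).const_sub D)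
  calc deriv (fun t : ℝ => t ^ k * (D - t)) t
      = k * t ^ (k - 1) * (D - t) + t ^ k * (-1) := hderiv.deriv
    _ = t ^ (k - 1) * (k * D - t * (k + 1)) := by
      rw [rpow_sub_one ht_pos.ne']
      field_simp
      ring
    _ < 0 := mul_neg_of_pos_of_neg (rpow_pos_of_pos ht_pos _) (sub_neg.2 hcrit)

lemma strictAntiOn_rpow_mul_sqrt_sub {k D : ℝ} (hk : 0 ≤ k) (hD : 0 ≤ D) :
    StrictAntiOn (fun t : ℝ => t ^ k * √(D - t)) (Icc (2 * k * D / (2 * k + 1)) D) := by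
  have hnonneg : ∀ t ∈ Icc (2 * k * D / (2 * k + 1)) D, 0 ≤ t := fun t ht =>
    le_trans (by positivity) ht.1
  have hsq : StrictAntiOn (fun t : ℝ => t ^ (2 * k) * (D - t))
      (Icc (2 * k * D / (2 * k + 1)) D) :=
    (strictAntiOn_rpow_mul_sub (by positivity) hD).mono Icc_subset_Ici_self
  refine (strictMonoOn_sqrt.comp_strictAntiOn hsq fun t ht => ?_).congr fun t ht => ?_
  · exact mul_nonneg (rpow_nonneg (hnonneg t ht) _) (sub_nonneg.2 ht.2)
  · have hpow : t ^ (2 * k) = (t ^ k) ^ 2 := by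
      rw [mul_comm]
      exact_mod_cast rpow_mul_natCast (hnonneg t ht) k 2
    have ht_pow : 0 ≤ t ^ k := rpow_nonneg (hnonneg t ht) k
    simp only [Function.comp_apply, hpow, sqrt_mul (sq_nonneg _), sqrt_sq ht_pow]

/-- The specific enthalpy at pressure `p` of a polytropic gas with adiabatic exponent `γ`, divided
by `S ^ (1 / γ)`; with this scaling it depends only on the pressure. -/
noncomputable def scaledEnthalpy (γ p : ℝ) : ℝ :=
  (γ * p / (γ - 1)) ^ ((γ - 1) / γ)

/-- The pressure at which the scaled enthalpy of a polytropic gas equals `t`. It gives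
`p_c(D)` for `t = 2D/(γ+1)` and `p^*(D)` for `t = D`. -/
noncomputable def pressureOfScaledEnthalpy (γ t : ℝ) : ℝ :=
  (γ - 1) / γ * t ^ (γ / (γ - 1))

section PolytropicGas

variable {γ : ℝ}

lemma strictMonoOn_scaledEnthalpy (hγ : 1 < γ) : StrictMonoOn (scaledEnthalpy γ) (Ici 0) := by
  intro p hp q _ hpq
  rw [mem_Ici] at hp
  have : 0 < γ - 1 := sub_pos.2 hγ
  unfold scaledEnthalpy
  gcongr

lemma pressureOfScaledEnthalpy_nonneg (hγ : 1 < γ) {t : ℝ} (ht : 0 ≤ t) :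
    0 ≤ pressureOfScaledEnthalpy γ t := by
  have : 0 < γ - 1 := sub_pos.2 hγ
  unfold pressureOfScaledEnthalpy
  positivity

lemma scaledEnthalpy_pressureOfScaledEnthalpy (hγ : 1 < γ) {t : ℝ} (ht : 0 ≤ t) :
    scaledEnthalpy γ (pressureOfScaledEnthalpy γ t) = t := by
  have : 0 < γ - 1 := sub_pos.2 hγ
  have hcancel : γ * ((γ - 1) / γ * t ^ (γ / (γ - 1))) / (γ - 1) = t ^ (γ / (γ - 1)) := by
    field_simp
  rw [scaledEnthalpy, pressureOfScaledEnthalpy, hcancel, ← inv_div γ (γ - 1)]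
  exact rpow_rpow_inv ht (by positivity)

lemma Icc_pressureOfScaledEnthalpy_subset_Ici (hγ : 1 < γ) {s : ℝ} (hs : 0 ≤ s) (t : ℝ) :
    Icc (pressureOfScaledEnthalpy γ s) (pressureOfScaledEnthalpy γ t) ⊆ Ici 0 :=
  fun _ hp => (pressureOfScaledEnthalpy_nonneg hγ hs).trans hp.1

lemma mapsTo_scaledEnthalpy_Icc (hγ : 1 < γ) {s t : ℝ} (hs : 0 ≤ s) (ht : 0 ≤ t) :
    MapsTo (scaledEnthalpy γ)
      (Icc (pressureOfScaledEnthalpy γ s) (pressureOfScaledEnthalpy γ t)) (Icc s t) := by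
  have hmono := (strictMonoOn_scaledEnthalpy hγ).monotoneOn.mono
    (Icc_pressureOfScaledEnthalpy_subset_Ici hγ hs t)
  simpa only [scaledEnthalpy_pressureOfScaledEnthalpy hγ hs,
    scaledEnthalpy_pressureOfScaledEnthalpy hγ ht] using hmono.mapsTo_Icc

lemma density_eq_scaledEnthalpy_rpow (hγ : 1 < γ) {S p : ℝ} (hS : 0 ≤ S) (hp : 0 ≤ p) :
    (γ * p / ((γ - 1) * S)) ^ (1 / γ) =
      scaledEnthalpy γ p ^ (1 / (γ - 1)) / S ^ (1 / γ) := by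
  have : 0 < γ - 1 := sub_pos.2 hγ
  have hq : 0 ≤ γ * p / (γ - 1) := by positivity
  have hexp : (γ - 1) / γ * (1 / (γ - 1)) = 1 / γ := by field_simp
  rw [scaledEnthalpy, ← rpow_mul hq, hexp, ← div_div, div_rpow hq hS]

lemma momentum_eq_scaledEnthalpy (hγ : 1 < γ) {S p : ℝ} (D : ℝ) (hS : 0 ≤ S) (hp : 0 ≤ p) :
    (γ * p / ((γ - 1) * S)) ^ (1 / γ) * √(2 * S ^ (1 / γ) * (D - scaledEnthalpy γ p)) =
      √(2 * S ^ (1 / γ)) / S ^ (1 / γ) *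
        (scaledEnthalpy γ p ^ (1 / (γ - 1)) * √(D - scaledEnthalpy γ p)) := by
  rw [density_eq_scaledEnthalpy_rpow hγ hS hp, sqrt_mul (by positivity) (D - _)]
  ring

lemma strictAntiOn_scaledEnthalpy_rpow_mul_sqrt_sub (hγ : 1 < γ) {D : ℝ} (hD : 0 ≤ D) :
    StrictAntiOn (fun p => scaledEnthalpy γ p ^ (1 / (γ - 1)) * √(D - scaledEnthalpy γ p))
      (Icc (pressureOfScaledEnthalpy γ (2 * D / (γ + 1))) (pressureOfScaledEnthalpy γ D)) := by
  have : 0 < γ - 1 := sub_pos.2 hγ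
  have hcrit_nonneg : 0 ≤ 2 * D / (γ + 1) := by positivity
  have hcrit : 2 * (1 / (γ - 1)) * D / (2 * (1 / (γ - 1)) + 1) = 2 * D / (γ + 1) := by
    field_simp
    ring
  have hanti := strictAntiOn_rpow_mul_sqrt_sub (k := 1 / (γ - 1)) (by positivity) hD
  rw [hcrit] at hanti
  exact hanti.comp_strictMonoOn
    ((strictMonoOn_scaledEnthalpy hγ).mono
      (Icc_pressureOfScaledEnthalpy_subset_Ici hγ hcrit_nonneg D))
    (mapsTo_scaledEnthalpy_Icc hγ hcrit_nonneg hD)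

end PolytropicGas

/-- Let `γ > 1`, `B, S > 0` and `D = B·S^(-1/γ)`. The momentum function
`M(p) = (γp/((γ-1)S))^(1/γ) · √(2S^(1/γ)(D - (γp/(γ-1))^((γ-1)/γ)))` is strictly
antitone on the subsonic pressure interval `[p_c(D), p^*(D)]`, where
`p_c(D) = ((γ-1)/γ)(2D/(γ+1))^(γ/(γ-1))` and `p^*(D) = ((γ-1)/γ)D^(γ/(γ-1))`. -/
theorem stmt_11 (γ B S : ℝ) (hγ : 1 < γ) (hB : 0 < B) (hS : 0 < S) :
    StrictAntiOn
      (fun p : ℝ => (γ * p / ((γ - 1) * S)) ^ (1 / γ) *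
        Real.sqrt (2 * S ^ (1 / γ) *
          (B * S ^ (-1 / γ) - (γ * p / (γ - 1)) ^ ((γ - 1) / γ))))
      (Set.Icc (((γ - 1) / γ) * (2 * (B * S ^ (-1 / γ)) / (γ + 1)) ^ (γ / (γ - 1)))
        (((γ - 1) / γ) * (B * S ^ (-1 / γ)) ^ (γ / (γ - 1)))) := by
  have hD : 0 ≤ B * S ^ (-1 / γ) := by positivity
  have hfactor : 0 < √(2 * S ^ (1 / γ)) / S ^ (1 / γ) := by positivity
  refine ((strictMono_mul_left_of_pos hfactor).comp_strictAntiOn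
    (strictAntiOn_scaledEnthalpy_rpow_mul_sqrt_sub hγ hD)).congr fun p hp => ?_
  have hp_nonneg : 0 ≤ p :=
    Icc_pressureOfScaledEnthalpy_subset_Ici hγ (by positivity) _ hp
  exact (momentum_eq_scaledEnthalpy hγ (B * S ^ (-1 / γ)) hS.le hp_nonneg).symm
end

section
/- Let σ > 0, M ≥ 1 and 0 < 𝔟_* ≤ 𝔟^* be real constants, and define P(x,y) := σ·(y² + y³ − (8/M²)·x²·y²). Then P has partial derivatives ∂ₓP = −(16σ/M²)·x·y², ∂ᵧP = σ·(2y + 3y² − (16/M²)·x²·y), ∂ₓₓP = −(16σ/M²)·y², ∂ₓᵧP = −(32σ/M²)·x·y, ∂ᵧᵧP = σ·(2 + 6y − (16/M²)·x²). Moreover, if a₁₁, a₁₂, a₂₂ are real numbers with 𝔟_* ≤ a₁₁ ≤ 𝔟^*, 𝔟_* ≤ a₂₂ ≤ 𝔟^*, |a₁₂| ≤ 𝔟^*, and if M ≥ 40·𝔟^*/𝔟_*, then for all (x,y) with |x| ≤ M/2 and 0 < y ≤ 1/2, a₁₁·∂ₓₓP + 2a₁₂·∂ₓᵧP + a₂₂·∂ᵧᵧP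 − (a₁₂·∂ₓP + a₂₂·∂ᵧP)/y = −(16σ/M²)·a₁₁·y² − (48σ/M²)·a₁₂·x·y + 3σ·a₂₂·y ≥ 2σ·𝔟_*·y. -/
/-!
At leading order `P ≈ σy²`, on which `a₂₂∂_{yy}` and `(a₂₂/y)∂_y` cancel; they cancel on `x²y²` as
well. Hence `a₂₂` contributes only through the cubic term, giving `3σa₂₂y ≥ 3σ𝔟_*y`. What remains is
`-σy(16a₁₁y + 48a₁₂x)/M²`, which costs at most `σ𝔟_*y` as soon as `(16y + 48|x|)𝔟^* ≤ 𝔟_*M²`.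
-/

noncomputable section Definitions

/-- The comparison function `P(x,y) = σ(y² + y³ - (8/M²)x²y²)`. -/
def barrier (σ M x y : ℝ) : ℝ := σ * (y ^ 2 + y ^ 3 - 8 / M ^ 2 * x ^ 2 * y ^ 2)

/-- The partial derivative `∂ₓP` of `barrier`. -/
def barrierDx (σ M x y : ℝ) : ℝ := -(16 * σ / M ^ 2) * x * y ^ 2

/-- The partial derivative `∂ᵧP` of `barrier`. -/
def barrierDy (σ M x y : ℝ) : ℝ := σ * (2 * y + 3 * y ^ 2 - 16 / M ^ 2 * x ^ 2 * y)

/-- The second partial derivative `∂ₓₓP` of `barrier`, which does not depend on `x`. -/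
def barrierDxx (σ M y : ℝ) : ℝ := -(16 * σ / M ^ 2) * y ^ 2

/-- The mixed partial derivative `∂ₓᵧP` of `barrier`. -/
def barrierDxy (σ M x y : ℝ) : ℝ := -(32 * σ / M ^ 2) * x * y

/-- The second partial derivative `∂ᵧᵧP` of `barrier`. -/
def barrierDyy (σ M x y : ℝ) : ℝ := σ * (2 + 6 * y - 16 / M ^ 2 * x ^ 2)

/-- The value at `(x, y)` of `ℒP = a_{ij}∂_{ij}P - (a_{i2}/y)∂_iP` for `P = barrier σ M`, where
`a₁₁, a₁₂ = a₂₁, a₂₂` are the values of the coefficients at that point. -/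
def barrierOperator (σ M a₁₁ a₁₂ a₂₂ x y : ℝ) : ℝ :=
  a₁₁ * barrierDxx σ M y + 2 * a₁₂ * barrierDxy σ M x y + a₂₂ * barrierDyy σ M x y -
    (a₁₂ * barrierDx σ M x y + a₂₂ * barrierDy σ M x y) / y

end Definitions

section Derivatives

variable (σ M x y : ℝ)

theorem hasDerivAt_barrier_left :
    HasDerivAt (fun x => barrier σ M x y) (barrierDx σ M x y) x := by
  have h := ((((hasDerivAt_pow 2 x).const_mul (8 / M ^ 2)).mul_const (y ^ 2)).const_sub
    (y ^ 2 + y ^ 3)).const_mul σ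
  exact h.congr_deriv (by simp only [barrierDx]; push_cast; ring)

theorem hasDerivAt_barrier_right :
    HasDerivAt (fun y => barrier σ M x y) (barrierDy σ M x y) y := by
  have h := (((hasDerivAt_pow 2 y).add (hasDerivAt_pow 3 y)).sub
    ((hasDerivAt_pow 2 y).const_mul (8 / M ^ 2 * x ^ 2))).const_mul σ
  exact h.congr_deriv (by simp only [barrierDy]; push_cast; ring)

theorem hasDerivAt_barrierDx_left :
    HasDerivAt (fun x => barrierDx σ M x y) (barrierDxx σ M y) x :=
  (hasDerivAt_const_mul (-(16 * σ / M ^ 2))).mul_const (y ^ 2)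

theorem hasDerivAt_barrierDx_right :
    HasDerivAt (fun y => barrierDx σ M x y) (barrierDxy σ M x y) y := by
  have h := (hasDerivAt_pow 2 y).const_mul (-(16 * σ / M ^ 2) * x)
  exact h.congr_deriv (by simp only [barrierDxy]; push_cast; ring)

theorem hasDerivAt_barrierDy_right :
    HasDerivAt (fun y => barrierDy σ M x y) (barrierDyy σ M x y) y := by
  have h := (((hasDerivAt_const_mul 2).add ((hasDerivAt_pow 2 y).const_mul 3)).sub
    (hasDerivAt_const_mul (16 / M ^ 2 * x ^ 2))).const_mul σ
  exact h.congr_deriv (by simp only [barrierDyy]; push_cast; ring)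

end Derivatives

theorem barrierOperator_eq (σ M a₁₁ a₁₂ a₂₂ x : ℝ) {y : ℝ} (hy : y ≠ 0) :
    barrierOperator σ M a₁₁ a₁₂ a₂₂ x y =
      -(16 * σ / M ^ 2) * a₁₁ * y ^ 2 - 48 * σ / M ^ 2 * a₁₂ * x * y + 3 * σ * a₂₂ * y := by
  have first_order_eq : (a₁₂ * barrierDx σ M x y + a₂₂ * barrierDy σ M x y) / y =
      a₁₂ * (-(16 * σ / M ^ 2) * x * y) + a₂₂ * (σ * (2 + 3 * y - 16 / M ^ 2 * x ^ 2)) := by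
    rw [div_eq_iff hy, barrierDx, barrierDy]
    ring
  rw [barrierOperator, first_order_eq, barrierDxx, barrierDxy, barrierDyy]
  ring

section LowerBound

variable {σ M bs bt a₁₁ a₁₂ a₂₂ x y : ℝ}

theorem mul_add_mul_le_of_abs_le {p q : ℝ} (hp : 0 ≤ p) (hq : 0 ≤ q) (h₁₁ : a₁₁ ≤ bt)
    (h₁₂ : |a₁₂| ≤ bt) (hy : 0 ≤ y) :
    p * (a₁₁ * y) + q * (a₁₂ * x) ≤ (p * y + q * |x|) * bt := by
  have hx : a₁₂ * x ≤ bt * |x| :=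
    calc a₁₂ * x ≤ |a₁₂| * |x| := (le_abs_self _).trans_eq (abs_mul _ _)
      _ ≤ bt * |x| := by gcongr
  calc p * (a₁₁ * y) + q * (a₁₂ * x) ≤ p * (bt * y) + q * (bt * |x|) := by gcongr
    _ = (p * y + q * |x|) * bt := by ring

theorem two_mul_le_barrierOperator (hσ : 0 ≤ σ) (hM : M ≠ 0) (h₁₁ : a₁₁ ≤ bt) (h₁₂ : |a₁₂| ≤ bt)
    (h₂₂ : bs ≤ a₂₂) (hy : 0 < y) (hxy : (16 * y + 48 * |x|) * bt ≤ bs * M ^ 2) :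
    2 * σ * bs * y ≤ barrierOperator σ M a₁₁ a₁₂ a₂₂ x y := by
  have correction_le : (16 * (a₁₁ * y) + 48 * (a₁₂ * x)) / M ^ 2 ≤ bs := by
    rw [div_le_iff₀ (by positivity)]
    exact (mul_add_mul_le_of_abs_le (by norm_num) (by norm_num) h₁₁ h₁₂ hy.le).trans hxy
  calc 2 * σ * bs * y = σ * y * (3 * bs - bs) := by ring
    _ ≤ σ * y * (3 * a₂₂ - (16 * (a₁₁ * y) + 48 * (a₁₂ * x)) / M ^ 2) := by gcongr
    _ = -(16 * σ / M ^ 2) * a₁₁ * y ^ 2 - 48 * σ / M ^ 2 * a₁₂ * x * y + 3 * σ * a₂₂ * y := by ring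
    _ = barrierOperator σ M a₁₁ a₁₂ a₂₂ x y := (barrierOperator_eq σ M a₁₁ a₁₂ a₂₂ x hy.ne').symm

theorem add_abs_mul_le_of_mem_rectangle (hbs : 0 < bs) (hbt : 0 ≤ bt) (hM : 1 ≤ M)
    (hMb : 40 * bt / bs ≤ M) (hx : |x| ≤ M / 2) (hy : y ≤ 1 / 2) :
    (16 * y + 48 * |x|) * bt ≤ bs * M ^ 2 :=
  calc (16 * y + 48 * |x|) * bt ≤ (40 * M) * bt := by gcongr; linarith
    _ = M * (40 * bt) := by ring
    _ ≤ M * (M * bs) :=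
      mul_le_mul_of_nonneg_left ((div_le_iff₀ hbs).1 hMb) (zero_le_one.trans hM)
    _ = bs * M ^ 2 := by ring

end LowerBound

theorem stmt_18_general {σ M : ℝ} (hσ : 0 ≤ σ) (hM : M ≠ 0) :
    (∀ x y, HasDerivAt (fun x => barrier σ M x y) (barrierDx σ M x y) x) ∧
    (∀ x y, HasDerivAt (fun y => barrier σ M x y) (barrierDy σ M x y) y) ∧
    (∀ x y, HasDerivAt (fun x => barrierDx σ M x y) (barrierDxx σ M y) x) ∧
    (∀ x y, HasDerivAt (fun y => barrierDx σ M x y) (barrierDxy σ M x y) y) ∧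
    (∀ x y, HasDerivAt (fun y => barrierDy σ M x y) (barrierDyy σ M x y) y) ∧
    (∀ a₁₁ a₁₂ a₂₂ x y : ℝ, y ≠ 0 → barrierOperator σ M a₁₁ a₁₂ a₂₂ x y =
      -(16 * σ / M ^ 2) * a₁₁ * y ^ 2 - 48 * σ / M ^ 2 * a₁₂ * x * y + 3 * σ * a₂₂ * y) ∧
    ∀ bs bt a₁₁ a₁₂ a₂₂ x y : ℝ, a₁₁ ≤ bt → |a₁₂| ≤ bt → bs ≤ a₂₂ → 0 < y →
      (16 * y + 48 * |x|) * bt ≤ bs * M ^ 2 →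
        2 * σ * bs * y ≤ barrierOperator σ M a₁₁ a₁₂ a₂₂ x y :=
  ⟨hasDerivAt_barrier_left σ M, hasDerivAt_barrier_right σ M, hasDerivAt_barrierDx_left σ M,
    hasDerivAt_barrierDx_right σ M, hasDerivAt_barrierDy_right σ M,
    fun a₁₁ a₁₂ a₂₂ x _ => barrierOperator_eq σ M a₁₁ a₁₂ a₂₂ x,
    fun _ _ _ _ _ _ _ => two_mul_le_barrierOperator hσ hM⟩

/-- Barrier function near the symmetry axis: for
`P(x,y) = σ(y² + y³ - (8/M²)x²y²)` the stated partial derivatives hold, and if the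
coefficients `a₁₁, a₁₂, a₂₂` are uniformly elliptic with bounds `𝔟_* ≤ a₁₁, a₂₂ ≤ 𝔟^*`,
`|a₁₂| ≤ 𝔟^*` and `M ≥ 40𝔟^*/𝔟_*`, then on `|x| ≤ M/2`, `0 < y ≤ 1/2` the operator
`a_{ij}∂_{ij}P - (a_{i2}/y)∂_iP` equals
`-(16σ/M²)a₁₁y² - (48σ/M²)a₁₂xy + 3σa₂₂y` and is at least `2σ𝔟_*y`. -/
theorem stmt_18 (σ M bs bt : ℝ) (hσ : 0 < σ) (hM : 1 ≤ M)
    (hbs : 0 < bs) (hbst : bs ≤ bt) :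
    (∀ x y : ℝ, HasDerivAt (fun x : ℝ => σ * (y ^ 2 + y ^ 3 - 8 / M ^ 2 * x ^ 2 * y ^ 2))
      (-(16 * σ / M ^ 2) * x * y ^ 2) x) ∧
    (∀ x y : ℝ, HasDerivAt (fun y : ℝ => σ * (y ^ 2 + y ^ 3 - 8 / M ^ 2 * x ^ 2 * y ^ 2))
      (σ * (2 * y + 3 * y ^ 2 - 16 / M ^ 2 * x ^ 2 * y)) y) ∧
    (∀ x y : ℝ, HasDerivAt (fun x : ℝ => -(16 * σ / M ^ 2) * x * y ^ 2)
      (-(16 * σ / M ^ 2) * y ^ 2) x) ∧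
    (∀ x y : ℝ, HasDerivAt (fun y : ℝ => -(16 * σ / M ^ 2) * x * y ^ 2)
      (-(32 * σ / M ^ 2) * x * y) y) ∧
    (∀ x y : ℝ, HasDerivAt (fun y : ℝ => σ * (2 * y + 3 * y ^ 2 - 16 / M ^ 2 * x ^ 2 * y))
      (σ * (2 + 6 * y - 16 / M ^ 2 * x ^ 2)) y) ∧
    (∀ a11 a12 a22 : ℝ, bs ≤ a11 → a11 ≤ bt → bs ≤ a22 → a22 ≤ bt → |a12| ≤ bt →
      40 * bt / bs ≤ M →
      ∀ x y : ℝ, |x| ≤ M / 2 → 0 < y → y ≤ 1 / 2 →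
        (a11 * (-(16 * σ / M ^ 2) * y ^ 2) + 2 * a12 * (-(32 * σ / M ^ 2) * x * y) +
            a22 * (σ * (2 + 6 * y - 16 / M ^ 2 * x ^ 2)) -
            (a12 * (-(16 * σ / M ^ 2) * x * y ^ 2) +
              a22 * (σ * (2 * y + 3 * y ^ 2 - 16 / M ^ 2 * x ^ 2 * y))) / y =
          -(16 * σ / M ^ 2) * a11 * y ^ 2 - 48 * σ / M ^ 2 * a12 * x * y +
            3 * σ * a22 * y) ∧
        2 * σ * bs * y ≤
          -(16 * σ / M ^ 2) * a11 * y ^ 2 - 48 * σ / M ^ 2 * a12 * x * y +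
            3 * σ * a22 * y) := by
  obtain ⟨hDx, hDy, hDxx, hDxy, hDyy, hEq, hLe⟩ := stmt_18_general hσ.le (by positivity : M ≠ 0)
  refine ⟨hDx, hDy, hDxx, hDxy, hDyy, fun a11 a12 a22 _ h11 h22 _ h12 hMb x y hx hy hy' => ?_⟩
  have hxy := add_abs_mul_le_of_mem_rectangle hbs (hbs.le.trans hbst) hM hMb hx hy'
  have operator_eq := hEq a11 a12 a22 x y hy.ne'
  exact ⟨operator_eq, operator_eq ▸ hLe bs bt a11 a12 a22 x y h11 h12 h22 hy hxy⟩
end
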